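/- The group H has exactly 7 conjugacy classes. -/

import Mathlib

open Matrix Complex
open scoped MatrixGroups

noncomputable section

def jM : Matrix (Fin 2) (Fin 2) ℂ := !![0, Complex.I; Complex.I, 0]
def dM : Matrix (Fin 2) (Fin 2) ℂ :=
  ((Real.sqrt 2 : ℂ))⁻¹ • !![-1, 1; 1, 1]

def H : Subgroup (GL (Fin 2) ℂ) :=
  Subgroup.closure {g : GL (Fin 2) ℂ |
    (g : Matrix (Fin 2) (Fin 2) ℂ) = jM ∨
    (g : Matrix (Fin 2) (Fin 2) ℂ) = dM}

/-- Model of the semidihedral group of order 16: `(a, b)` stands for `r ^ a * d ^ b`. -/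
@[ext] structure SD where
  a : ZMod 8
  b : Bool

def sdEquiv : SD ≃ ZMod 8 × Bool where
  toFun x := (x.a, x.b)
  invFun p := ⟨p.1, p.2⟩
  left_inv _ := rfl
  right_inv _ := rfl

instance : DecidableEq SD := sdEquiv.decidableEq
instance : Fintype SD := Fintype.ofEquiv _ sdEquiv.symm

def tw (b : Bool) : ZMod 8 := if b then 3 else 1

instance : Group SD where
  mul x y := ⟨x.a + tw x.b * y.a, xor x.b y.b⟩
  one := ⟨0, false⟩
  inv x := ⟨-(tw x.b * x.a), x.b⟩
  mul_assoc := by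
    rintro ⟨a, b⟩ ⟨c, e⟩ ⟨f, g⟩
    apply SD.ext
    · change a + tw b * c + tw (xor b e) * f = a + tw b * (c + tw e * f)
      revert a c f b e; decide +revert
    · exact Bool.xor_assoc b e g
  one_mul := by
    rintro ⟨a, b⟩
    apply SD.ext
    · change 0 + tw false * a = a
      simp [tw]
    · exact Bool.false_xor b
  mul_one := by
    rintro ⟨a, b⟩
    apply SD.ext
    · change a + tw b * 0 = a
      simp
    · exact Bool.xor_false b
  inv_mul_cancel := by
    rintro ⟨a, b⟩
    apply SD.ext
    · change -(tw b * a) + tw b * a = 0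
      simp
    · exact Bool.xor_self b

theorem SD.mul_def (x y : SD) : x * y = ⟨x.a + tw x.b * y.a, xor x.b y.b⟩ := rfl
theorem SD.one_def : (1 : SD) = ⟨0, false⟩ := rfl

theorem sd_card : Nat.card (ConjClasses SD) = 7 := by
  have h := card_comm_eq_card_conjClasses_mul_card SD
  have h1 : Nat.card { p : SD × SD // Commute p.1 p.2 } = 112 := by
    have : DecidablePred fun p : SD × SD => Commute p.1 p.2 :=
      fun p => decEq (p.1 * p.2) (p.2 * p.1)
    have e : { p : SD × SD // Commute p.1 p.2 } ≃ { p : (ZMod 8 × Bool) × (ZMod 8 × Bool) //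
        p.1.1 + tw p.1.2 * p.2.1 = p.2.1 + tw p.2.2 * p.1.1 } :=
      (sdEquiv.prodCongr sdEquiv).subtypeEquiv (by
        rintro ⟨⟨a, b⟩, ⟨c, e⟩⟩
        simp [Commute, SemiconjBy, SD.mul_def, sdEquiv, Bool.xor_comm b e])
    rw [Nat.card_congr e, Nat.card_eq_fintype_card]
    decide +kernel
  have h2 : Nat.card SD = 16 := by
    rw [Nat.card_congr sdEquiv, Nat.card_eq_fintype_card]
    rfl
  rw [h1, h2] at h
  omega

section
variable {G : Type*} [Group G] (r d : G)

def sdFun (x : SD) : G := r ^ x.a.val * (if x.b then d else 1)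

variable {r d}

theorem pow_val_add (h8 : r ^ 8 = 1) (x y : ZMod 8) :
    r ^ (x + y).val = r ^ x.val * r ^ y.val := by
  rw [ZMod.val_add, ← pow_add, ← pow_eq_pow_mod _ h8]

theorem pow_val_mul (h8 : r ^ 8 = 1) (x y : ZMod 8) :
    r ^ (x * y).val = (r ^ x.val) ^ y.val := by
  rw [ZMod.val_mul, ← pow_mul, ← pow_eq_pow_mod _ h8]

theorem tw_comm (hd : d * r = r ^ 3 * d) (n : ℕ) : d * r ^ n = (r ^ 3) ^ n * d := by
  have : SemiconjBy d r (r ^ 3) := hd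
  exact this.pow_right n

def sdHom (h8 : r ^ 8 = 1) (h2 : d * d = 1) (hd : d * r = r ^ 3 * d) : SD →* G where
  toFun := sdFun r d
  map_one' := by simp [sdFun, SD.one_def]
  map_mul' := by
    rintro ⟨a, b⟩ ⟨c, e⟩
    have h3 : (3 : ZMod 8).val = 3 := rfl
    have hc := tw_comm hd c.val
    simp only [SD.mul_def, sdFun, pow_val_add h8]
    cases b
    · simp [tw, mul_assoc]
    · have : r ^ (tw true * c).val = (r ^ 3) ^ c.val := by
        rw [pow_val_mul h8]; rfl
      rw [this]
      cases e
      · simp [mul_assoc, hc]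
      · simp only [if_true, mul_assoc, Bool.xor_self]
        rw [← mul_assoc d (r ^ c.val) d, hc, mul_assoc, h2]
        simp

theorem sdHom_inj (h8 : r ^ 8 = 1) (h2 : d * d = 1) (hd : d * r = r ^ 3 * d) (h4 : r ^ 4 ≠ 1) :
    Function.Injective (sdHom h8 h2 hd) := by
  rw [injective_iff_map_eq_one]
  rintro ⟨a, b⟩ h
  change r ^ a.val * (if b then d else 1) = 1 at h
  cases b
  · have ho : orderOf r = 2 ^ (2 + 1) := orderOf_eq_prime_pow (by simpa using h4) (by simpa using h8)
    have : r ^ a.val = 1 := by simpa using h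
    have h5 := orderOf_dvd_of_pow_eq_one this
    rw [ho] at h5
    have h6 := ZMod.val_lt a
    have h7 : a.val = 0 := Nat.eq_zero_of_dvd_of_lt h5 h6
    rw [SD.one_def]
    congr
    exact (ZMod.val_eq_zero a).1 h7
  · exfalso
    have h : r ^ a.val * d = 1 := by simpa using h
    have hd' : d = (r ^ a.val)⁻¹ := (inv_eq_of_mul_eq_one_right h).symm
    have hc : Commute d r := by
      rw [hd']; exact ((Commute.refl r).pow_left _).inv_left
    have h9 : r * d = r ^ 3 * d := hc.eq.symm.trans hd
    have h10 : r = r ^ 3 := mul_right_cancel h9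
    apply h4
    have h11 : r ^ 2 = 1 := by
      have : r * 1 = r * r ^ 2 := by rw [mul_one, ← pow_succ']; exact h10
      exact (mul_left_cancel this).symm
    rw [show 4 = 2 * 2 from rfl, pow_mul, h11, one_pow]

end

theorem s_sq : ((Real.sqrt 2 : ℂ))⁻¹ ^ 2 = 1 / 2 := by
  rw [inv_pow, ← Complex.ofReal_pow, Real.sq_sqrt (by norm_num)]
  norm_num

theorem jj : jM * jM = -1 := by
  ext i k; fin_cases i <;> fin_cases k <;> simp [jM, Matrix.mul_apply]

theorem dd : dM * dM = 1 := by
  have h := s_sq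
  rw [dM, smul_mul_smul_comm, ← sq, h]
  ext i k; fin_cases i <;> fin_cases k <;> norm_num [Matrix.mul_apply]

theorem r2 : (jM * dM) * (jM * dM) = !![0, -1; 1, 0] := by
  have h := s_sq
  rw [dM, mul_smul_comm, smul_mul_smul_comm, ← sq, h, jM]
  ext i k; fin_cases i <;> fin_cases k <;> norm_num [Matrix.mul_apply]

theorem r4 : ((jM * dM) * (jM * dM)) * ((jM * dM) * (jM * dM)) = -1 := by
  rw [r2]
  ext i k; fin_cases i <;> fin_cases k <;> simp [Matrix.mul_apply]

theorem H_conj_classes : Nat.card (ConjClasses H) = 7 := by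
  let j : GL (Fin 2) ℂ := ⟨jM, -jM, by simp [jj], by simp [jj]⟩
  let d : GL (Fin 2) ℂ := ⟨dM, dM, dd, dd⟩
  have hj : (j : Matrix (Fin 2) (Fin 2) ℂ) = jM := rfl
  have hdv : (d : Matrix (Fin 2) (Fin 2) ℂ) = dM := rfl
  have hH : H = Subgroup.closure {j, d} := by
    unfold H
    congr 1
    ext g
    simp [Units.ext_iff, hj, hdv]
  have h2 : d * d = 1 := Units.ext dd
  have hr4 : (j * d) ^ 4 = -1 := by
    have : (j * d) ^ 4 = ((j * d) * (j * d)) * ((j * d) * (j * d)) := by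
      simp only [pow_succ, pow_zero, one_mul, mul_assoc]
    rw [this]
    exact Units.ext r4
  have hjj : j * j = -1 := Units.ext jj
  have h4 : (j * d) ^ 4 ≠ 1 := by
    rw [hr4]
    intro h
    have := congrArg (fun g : GL (Fin 2) ℂ => (g : Matrix (Fin 2) (Fin 2) ℂ) 0 0) h
    norm_num at this
  have h8 : (j * d) ^ 8 = 1 := by
    rw [show 8 = 4 * 2 from rfl, pow_mul, hr4]; simp
  have hd : d * (j * d) = (j * d) ^ 3 * d := by
    -- `(j d)^4 = j j = -1`, so `(j d)^3 = (j d)⁻¹ * (j * j) = d j`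
    have h5 : (j * d) * (j * d) ^ 3 = j * j := by rw [← pow_succ', hr4, hjj]
    have h6 : (j * d) * (d * j) = j * j := by
      rw [mul_assoc, ← mul_assoc d d j, h2, one_mul]
    rw [mul_left_cancel (h5.trans h6.symm), mul_assoc]
  have hinj := sdHom_inj h8 h2 hd h4
  have hrd : sdHom h8 h2 hd ⟨1, false⟩ = j * d := by
    change (j * d) ^ 1 * 1 = _
    simp
  have hdd : sdHom h8 h2 hd ⟨0, true⟩ = d := by
    change (j * d) ^ 0 * d = _
    simp
  have hrange : (sdHom h8 h2 hd).range = H := by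
    rw [hH]
    apply le_antisymm
    · have jm : j ∈ Subgroup.closure {j, d} := Subgroup.subset_closure (by simp)
      have dm : d ∈ Subgroup.closure {j, d} := Subgroup.subset_closure (by simp)
      rintro _ ⟨⟨a, b⟩, rfl⟩
      change (j * d) ^ a.val * (if b then d else 1) ∈ _
      refine mul_mem (pow_mem (mul_mem jm dm) _) ?_
      split
      · exact dm
      · exact one_mem _
    · rw [Subgroup.closure_le]
      have dm : d ∈ (sdHom h8 h2 hd).range := ⟨_, hdd⟩
      have rm : j * d ∈ (sdHom h8 h2 hd).range := ⟨_, hrd⟩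
      rintro g (rfl | rfl)
      · have := mul_mem rm dm
        rwa [mul_assoc, h2, mul_one] at this
      · exact dm
  have e : SD ≃* H := (MonoidHom.ofInjective hinj).trans (MulEquiv.subgroupCongr hrange)
  have e2 : ConjClasses SD ≃ ConjClasses H :=
    { toFun := ConjClasses.map e.toMonoidHom
      invFun := ConjClasses.map e.symm.toMonoidHom
      left_inv := by
        intro x
        induction x using Quotient.inductionOn with
        | _ x => exact congrArg ConjClasses.mk (e.symm_apply_apply x)
      right_inv := by
        intro x
        induction x using Quotient.inductionOn with
        | _ x => exact congrArg ConjClasses.mk (e.apply_symm_apply x) }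
  rw [← Nat.card_congr e2, sd_card]
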